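/- Let $p\in(1,\infty)$, $\theta\in\mathbb{R}$, and $u\in C_c^\infty(\mathbb{R}^d_+)$. Then $\frac{\theta^2}{p^2}\int_{\mathbb{R}^d_+} |u|^p x_d^{\theta-1}\,dx \leq \int_{\mathbb{R}^d_+} |u|^{p-2}(D_d u)^2 x_d^{\theta+1}\,dx$. -/

import Mathlib

open MeasureTheory

/-!
Write `ℓ` for the linear functional defining the half space and `c = θ ℓ(e) / p`. Integration by
parts gives `∫ |u|^(p-2) u (∂ₑu) ℓ^θ = -c ∫ |u|^p ℓ^(θ-1)`, so expanding the square in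
`0 ≤ ∫ |u|^(p-2) ℓ^(θ-1) (c u + ℓ ∂ₑu)²` yields the inequality, provided the three terms of the
expansion are integrable. For `p < 2` this is not obvious for `|u|^(p-2) (∂ₑu)² ℓ^(θ+1)`. There one
integrates by parts against `φ_ε(u)`, where `φ_ε(s) = s (s² + ε)^((p-2)/2)` satisfies
`φ_ε'(s) ≥ (p-1) s² (s² + ε)^((p-4)/2)` and is bounded uniformly in `ε ≤ 1` on bounded sets, and
concludes with Fatou's lemma.
-/

namespace WeightedHardy

open Filter Topology

lemma integrable_of_tendsto_of_integral_le {α : Type*} [MeasurableSpace α] {μ : Measure α}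
    {F : ℕ → α → ℝ} {f : α → ℝ} {C : ℝ}
    (hF : ∀ k, Integrable (F k) μ) (hF_nonneg : ∀ k, 0 ≤ᵐ[μ] F k) (hC : ∀ k, ∫ x, F k x ∂μ ≤ C)
    (hlim : ∀ᵐ x ∂μ, Tendsto (fun k => F k x) atTop (𝓝 (f x))) : Integrable f μ := by
  refine ⟨aestronglyMeasurable_of_tendsto_ae _ (fun k => (hF k).1) hlim, ?_⟩
  have hnorm (k : ℕ) : ∫⁻ x, ‖F k x‖ₑ ∂μ ≤ ENNReal.ofReal C := by
    rw [← ofReal_integral_norm_eq_lintegral_enorm (hF k)]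
    refine ENNReal.ofReal_le_ofReal (le_of_eq_of_le (integral_congr_ae ?_) (hC k))
    filter_upwards [hF_nonneg k] with x hx using Real.norm_of_nonneg hx
  calc ∫⁻ x, ‖f x‖ₑ ∂μ
      = ∫⁻ x, liminf (fun k => ‖F k x‖ₑ) atTop ∂μ :=
        lintegral_congr_ae <| hlim.mono fun x hx => hx.enorm.liminf_eq.symm
    _ ≤ liminf (fun k => ∫⁻ x, ‖F k x‖ₑ ∂μ) atTop :=
        lintegral_liminf_le' fun k => (hF k).1.enorm
    _ ≤ ENNReal.ofReal C :=
        liminf_le_of_frequently_le' (Eventually.of_forall hnorm).frequently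
    _ < ⊤ := ENNReal.ofReal_lt_top

lemma contDiff_sq_add_rpow {ε : ℝ} (hε : 0 < ε) (q : ℝ) {k : WithTop ℕ∞} :
    ContDiff ℝ k fun s : ℝ => (s ^ 2 + ε) ^ q :=
  ((contDiff_id.pow 2).add contDiff_const).rpow_const_of_ne
    fun s => (by positivity : s ^ 2 + ε ≠ 0)

/-- The regularization `s (s² + ε)^((p - 2) / 2)` of the odd power `|s|^(p - 2) s`; for `ε > 0` it
is smooth also at the origin, and so can be composed with `u` and differentiated. -/
noncomputable def regOddPow (p ε s : ℝ) : ℝ := s * (s ^ 2 + ε) ^ ((p - 2) / 2)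

section RegOddPow

variable {p ε : ℝ}

lemma contDiff_regOddPow (hε : 0 < ε) {k : WithTop ℕ∞} : ContDiff ℝ k (regOddPow p ε) :=
  contDiff_id.mul (contDiff_sq_add_rpow hε _)

lemma deriv_regOddPow (hε : 0 < ε) (s : ℝ) :
    deriv (regOddPow p ε) s = ((p - 1) * s ^ 2 + ε) * (s ^ 2 + ε) ^ ((p - 4) / 2) := by
  have hpos : 0 < s ^ 2 + ε := by positivity
  have hbase : HasDerivAt (fun s : ℝ => s ^ 2 + ε) (2 * s) s := by
    simpa using (hasDerivAt_pow 2 s).add_const ε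
  have hsplit : (s ^ 2 + ε) ^ ((p - 2) / 2) = (s ^ 2 + ε) ^ ((p - 4) / 2) * (s ^ 2 + ε) := by
    rw [← Real.rpow_add_one hpos.ne']; ring_nf
  have hexp : (p - 2) / 2 - 1 = (p - 4) / 2 := by ring
  have hderiv : HasDerivAt (regOddPow p ε) _ s :=
    (hasDerivAt_id s).mul (hbase.rpow_const (p := (p - 2) / 2) (Or.inl hpos.ne'))
  rw [hderiv.deriv, hexp, hsplit, id]
  ring

lemma sub_one_mul_sq_mul_rpow_le_deriv_regOddPow (hε : 0 < ε) (s : ℝ) :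
    (p - 1) * (s ^ 2 * (s ^ 2 + ε) ^ ((p - 4) / 2)) ≤ deriv (regOddPow p ε) s := by
  rw [deriv_regOddPow hε, ← mul_assoc]
  gcongr
  linarith

lemma abs_regOddPow_le (hp : 1 ≤ p) (hε : 0 < ε) (hε1 : ε ≤ 1) (s : ℝ) :
    |regOddPow p ε s| ≤ (s ^ 2 + 1) ^ ((p - 1) / 2) := by
  have hpos : 0 < s ^ 2 + ε := by positivity
  have habs : |s| ≤ (s ^ 2 + ε) ^ (1 / 2 : ℝ) := by
    rw [← Real.sqrt_eq_rpow]
    exact Real.abs_le_sqrt (by linarith)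
  calc |regOddPow p ε s|
      = |s| * (s ^ 2 + ε) ^ ((p - 2) / 2) := by
        rw [regOddPow, abs_mul, abs_of_pos (Real.rpow_pos_of_pos hpos _)]
    _ ≤ (s ^ 2 + ε) ^ (1 / 2 : ℝ) * (s ^ 2 + ε) ^ ((p - 2) / 2) := by gcongr
    _ = (s ^ 2 + ε) ^ ((p - 1) / 2) := by
        rw [← Real.rpow_add hpos]; congr 1; ring
    _ ≤ (s ^ 2 + 1) ^ ((p - 1) / 2) := by gcongr

lemma tendsto_sq_mul_rpow (hp : p ≠ 2) (s : ℝ) :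
    Tendsto (fun ε => s ^ 2 * (s ^ 2 + ε) ^ ((p - 4) / 2)) (𝓝 0) (𝓝 (|s| ^ (p - 2))) := by
  rcases eq_or_ne s 0 with rfl | hs
  · simp [Real.zero_rpow (sub_ne_zero.2 hp)]
  have hlim : Tendsto (fun ε => s ^ 2 * (s ^ 2 + ε) ^ ((p - 4) / 2)) (𝓝 0)
      (𝓝 (s ^ 2 * (s ^ 2 + 0) ^ ((p - 4) / 2))) :=
    ((tendsto_const_nhds.add tendsto_id).rpow_const (Or.inl (by positivity))).const_mul _
  convert hlim using 2
  rw [add_zero, ← sq_abs, ← Real.rpow_natCast_mul (abs_nonneg s), ← Real.rpow_natCast,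
    ← Real.rpow_add (abs_pos.2 hs)]
  congr 1
  push_cast
  ring

end RegOddPow

lemma rpow_mul_sq_add_mul_eq {p t : ℝ} (hp : p ≠ 0) (ht : 0 < t) (θ a b C : ℝ) :
    |a| ^ (p - 2) * t ^ (θ - 1) * (C / p * a + t * b) ^ 2 =
      C ^ 2 / p ^ 2 * (|a| ^ p * t ^ (θ - 1)) +
        2 * C / p ^ 2 * (p * |a| ^ (p - 2) * a * b * t ^ θ) +
        |a| ^ (p - 2) * b ^ 2 * t ^ (θ + 1) := by
  have ha : |a| ^ p = |a| ^ (p - 2) * a ^ 2 := by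
    rcases eq_or_ne a 0 with rfl | ha
    · simp [hp]
    · rw [← sq_abs a, ← Real.rpow_add_natCast (abs_ne_zero.2 ha)]
      norm_num
  have hθ : t ^ θ = t ^ (θ - 1) * t := by
    rw [← Real.rpow_add_one ht.ne', sub_add_cancel]
  have hθ' : t ^ (θ + 1) = t ^ (θ - 1) * t ^ 2 := by
    rw [Real.rpow_add_one ht.ne', hθ]; ring
  rw [ha, hθ, hθ']
  field_simp
  ring

lemma integrable_mul_rpow {X : Type*} [TopologicalSpace X] [MeasurableSpace X]
    [OpensMeasurableSpace X] {μ : Measure X} [IsFiniteMeasureOnCompacts μ] {v ρ : X → ℝ}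
    (hv : Continuous v) (hvc : HasCompactSupport v) (hρ : Continuous ρ)
    (hne : ∀ x ∈ tsupport v, ρ x ≠ 0) (a : ℝ) : Integrable (fun x => v x * ρ x ^ a) μ := by
  refine Continuous.integrable_of_hasCompactSupport ?_ hvc.mul_right
  exact continuous_of_tsupport fun x hx =>
    hv.continuousAt.mul <| hρ.continuousAt.rpow_const <| Or.inl <|
      hne x (tsupport_mul_subset_left hx)

section Calculus

variable {E : Type*} [NormedAddCommGroup E] [NormedSpace ℝ E]

lemma contDiff_mul_rpow {v ρ : E → ℝ} {k : WithTop ℕ∞} (hv : ContDiff ℝ k v)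
    (hρ : ContDiff ℝ k ρ) (hne : ∀ x ∈ tsupport v, ρ x ≠ 0) (a : ℝ) :
    ContDiff ℝ k fun x => v x * ρ x ^ a := by
  refine contDiff_iff_contDiffAt.2 fun x => ?_
  by_cases hx : x ∈ tsupport v
  · exact hv.contDiffAt.mul (hρ.contDiffAt.rpow_const_of_ne (hne x hx))
  · exact contDiffAt_const.congr_of_eventuallyEq <|
      notMem_tsupport_iff_eventuallyEq.1 fun hx' => hx (tsupport_mul_subset_left hx')

lemma continuous_fderiv_apply_const {u : E → ℝ} (hu : ContDiff ℝ 1 u) (e : E) :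
    Continuous fun x => fderiv ℝ u x e :=
  (hu.continuous_fderiv one_ne_zero).clm_apply continuous_const

lemma fderiv_abs_rpow_apply {u : E → ℝ} {x : E} {p : ℝ} (hp : 1 < p)
    (hu : DifferentiableAt ℝ u x) (e : E) :
    fderiv ℝ (fun y => |u y| ^ p) x e = p * |u x| ^ (p - 2) * u x * fderiv ℝ u x e := by
  have h : HasFDerivAt (fun y => |u y| ^ p) _ x :=
    (hasDerivAt_abs_rpow (u x) hp).comp_hasFDerivAt x hu.hasFDerivAt
  rw [h.fderiv, smul_apply, smul_eq_mul]

lemma rpow_mul_sq_add_mul_fderiv_eq {ℓ : E → ℝ} {p : ℝ} {u : E → ℝ} (hp : 1 < p)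
    (hu : Differentiable ℝ u) (hpos : tsupport u ⊆ {x | 0 < ℓ x}) (e : E) (θ C : ℝ) (x : E) :
    |u x| ^ (p - 2) * ℓ x ^ (θ - 1) * (C / p * u x + ℓ x * fderiv ℝ u x e) ^ 2 =
      C ^ 2 / p ^ 2 * (|u x| ^ p * ℓ x ^ (θ - 1)) +
        2 * C / p ^ 2 * (fderiv ℝ (fun y => |u y| ^ p) x e * ℓ x ^ θ) +
        |u x| ^ (p - 2) * fderiv ℝ u x e ^ 2 * ℓ x ^ (θ + 1) := by
  have hp0 : p ≠ 0 := by positivity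
  rw [fderiv_abs_rpow_apply hp (hu x)]
  by_cases hx : x ∈ tsupport u
  · exact rpow_mul_sq_add_mul_eq hp0 (hpos hx) θ (u x) (fderiv ℝ u x e) C
  · simp [image_eq_zero_of_notMem_tsupport hx, fderiv_of_notMem_tsupport ℝ hx, hp0]

lemma fderiv_rpow_apply {ℓ : E →L[ℝ] ℝ} {x : E} (hx : ℓ x ≠ 0) (θ : ℝ) (e : E) :
    fderiv ℝ (fun y => ℓ y ^ θ) x e = θ * ℓ e * ℓ x ^ (θ - 1) := by
  have h : HasFDerivAt (fun y => ℓ y ^ θ) _ x :=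
    (Real.hasDerivAt_rpow_const (Or.inl hx)).comp_hasFDerivAt x ℓ.hasFDerivAt
  rw [h.fderiv, smul_apply, smul_eq_mul]
  ring

variable [MeasurableSpace E] [BorelSpace E]

lemma integrable_sq_mul_rpow_mul_fderiv_mul {μ : Measure E}
    [IsFiniteMeasureOnCompacts μ] {p ε : ℝ} {u K : E → ℝ} {e : E} (hε : 0 < ε)
    (hu : ContDiff ℝ 1 u) (hK : Continuous K) (hKc : HasCompactSupport K) :
    Integrable (fun x => u x ^ 2 * (u x ^ 2 + ε) ^ ((p - 4) / 2) * (fderiv ℝ u x e * K x)) μ := by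
  have hpow : Continuous fun x => (u x ^ 2 + ε) ^ ((p - 4) / 2) :=
    (contDiff_sq_add_rpow hε _ (k := 0)).continuous.comp hu.continuous
  exact (((hu.continuous.pow 2).mul hpow).mul
    ((continuous_fderiv_apply_const hu e).mul hK)).integrable_of_hasCompactSupport
      hKc.mul_left.mul_left

variable [FiniteDimensional ℝ E] {μ : Measure E} [μ.IsAddHaarMeasure]

lemma integral_deriv_comp_mul_fderiv_mul {φ : ℝ → ℝ} {u K : E → ℝ} (hφ : ContDiff ℝ 1 φ)
    (hu : ContDiff ℝ 1 u) (hK : ContDiff ℝ 1 K) (hKc : HasCompactSupport K) (e : E) :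
    ∫ x, deriv φ (u x) * (fderiv ℝ u x e * K x) ∂μ = -∫ x, φ (u x) * fderiv ℝ K x e ∂μ := by
  have hφu : ContDiff ℝ 1 fun x => φ (u x) := hφ.comp hu
  have hchain (x : E) : fderiv ℝ (fun x => φ (u x)) x e = deriv φ (u x) * fderiv ℝ u x e := by
    have h : HasFDerivAt (fun x => φ (u x)) _ x :=
      (hφ.differentiable one_ne_zero (u x)).hasDerivAt.comp_hasFDerivAt x
        (hu.differentiable one_ne_zero x).hasFDerivAt
    rw [h.fderiv, smul_apply, smul_eq_mul]
  rw [integral_mul_fderiv_eq_neg_fderiv_mul_of_integrable, neg_neg]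
  · simp only [hchain, mul_assoc]
  · exact ((continuous_fderiv_apply_const hφu e).mul
      hK.continuous).integrable_of_hasCompactSupport hKc.mul_left
  · exact (hφu.continuous.mul
      (continuous_fderiv_apply_const hK e)).integrable_of_hasCompactSupport
        (hKc.fderiv_apply ℝ e).mul_left
  · exact (hφu.continuous.mul hK.continuous).integrable_of_hasCompactSupport hKc.mul_left
  · exact fun x _ => hφu.differentiable one_ne_zero x
  · exact fun x _ => hK.differentiable one_ne_zero x

section Integrability

variable {p ε : ℝ} {u K : E → ℝ} {e : E}

lemma sub_one_mul_integral_sq_mul_rpow_mul_fderiv_mul_le (hp : 1 ≤ p) (hε : 0 < ε) (hε1 : ε ≤ 1)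
    (hu : ContDiff ℝ 1 u) (hK : ContDiff ℝ 1 K) (hKc : HasCompactSupport K)
    (hK_nonneg : ∀ x, 0 ≤ fderiv ℝ u x e * K x) :
    (p - 1) * ∫ x, u x ^ 2 * (u x ^ 2 + ε) ^ ((p - 4) / 2) * (fderiv ℝ u x e * K x) ∂μ ≤
      ∫ x, (u x ^ 2 + 1) ^ ((p - 1) / 2) * |fderiv ℝ K x e| ∂μ := by
  have hφ : ContDiff ℝ 1 (regOddPow p ε) := contDiff_regOddPow hε
  have hDu : Continuous fun x => fderiv ℝ u x e := continuous_fderiv_apply_const hu e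
  have hDK : Continuous fun x => fderiv ℝ K x e := continuous_fderiv_apply_const hK e
  have hDKc : HasCompactSupport fun x => fderiv ℝ K x e := hKc.fderiv_apply ℝ e
  have hpow : Continuous fun x => (u x ^ 2 + 1) ^ ((p - 1) / 2) :=
    (contDiff_sq_add_rpow one_pos _ (k := 0)).continuous.comp hu.continuous
  calc (p - 1) * ∫ x, u x ^ 2 * (u x ^ 2 + ε) ^ ((p - 4) / 2) * (fderiv ℝ u x e * K x) ∂μ
      = ∫ x, (p - 1) * (u x ^ 2 * (u x ^ 2 + ε) ^ ((p - 4) / 2) * (fderiv ℝ u x e * K x)) ∂μ :=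
        (integral_const_mul _ _).symm
    _ ≤ ∫ x, deriv (regOddPow p ε) (u x) * (fderiv ℝ u x e * K x) ∂μ := by
        refine integral_mono
          ((integrable_sq_mul_rpow_mul_fderiv_mul hε hu hK.continuous hKc).const_mul _)
          ((((hφ.continuous_deriv le_rfl).comp hu.continuous).mul
            (hDu.mul hK.continuous)).integrable_of_hasCompactSupport hKc.mul_left.mul_left)
          fun x => ?_
        rw [← mul_assoc]
        exact mul_le_mul_of_nonneg_right
          (sub_one_mul_sq_mul_rpow_le_deriv_regOddPow hε (u x)) (hK_nonneg x)
    _ = ∫ x, -(regOddPow p ε (u x) * fderiv ℝ K x e) ∂μ := by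
        rw [integral_deriv_comp_mul_fderiv_mul hφ hu hK hKc, integral_neg]
    _ ≤ ∫ x, (u x ^ 2 + 1) ^ ((p - 1) / 2) * |fderiv ℝ K x e| ∂μ := by
        refine integral_mono
          (((hφ.continuous.comp hu.continuous).mul hDK).integrable_of_hasCompactSupport
            hDKc.mul_left).neg
          ((hpow.mul hDK.abs).integrable_of_hasCompactSupport hDKc.norm.mul_left)
          fun x => (neg_le_abs _).trans ?_
        rw [abs_mul]
        gcongr
        exact abs_regOddPow_le hp hε hε1 (u x)

lemma integrable_abs_rpow_mul_fderiv_mul (hp : 1 < p) (hu : ContDiff ℝ 1 u)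
    (hK : ContDiff ℝ 1 K) (hKc : HasCompactSupport K)
    (hK_nonneg : ∀ x, 0 ≤ fderiv ℝ u x e * K x) :
    Integrable (fun x => |u x| ^ (p - 2) * (fderiv ℝ u x e * K x)) μ := by
  rcases le_or_gt 2 p with hp2 | hp2
  · exact ((hu.continuous.abs.rpow_const fun x => Or.inr (by linarith)).mul
      ((continuous_fderiv_apply_const hu e).mul
        hK.continuous)).integrable_of_hasCompactSupport hKc.mul_left.mul_left
  have hε (k : ℕ) : (0 : ℝ) < 1 / (k + 1) := Nat.one_div_pos_of_nat
  have hε1 (k : ℕ) : 1 / ((k : ℝ) + 1) ≤ 1 := by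
    simpa using Nat.one_div_le_one_div (α := ℝ) k.zero_le
  refine integrable_of_tendsto_of_integral_le
    (fun k => integrable_sq_mul_rpow_mul_fderiv_mul (hε k) hu hK.continuous hKc)
    (fun k => Eventually.of_forall fun x => ?_)
    (fun k => (le_div_iff₀' (sub_pos.2 hp)).2 <|
      sub_one_mul_integral_sq_mul_rpow_mul_fderiv_mul_le hp.le (hε k) (hε1 k) hu hK hKc hK_nonneg)
    (Eventually.of_forall fun x => ?_)
  · have := hε k
    exact mul_nonneg (by positivity) (hK_nonneg x)
  · exact ((tendsto_sq_mul_rpow hp2.ne (u x)).comp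
      tendsto_one_div_add_atTop_nhds_zero_nat).mul_const _

end Integrability

section HalfSpace

variable {ℓ : E →L[ℝ] ℝ}

lemma integrable_abs_rpow_mul_sq_fderiv_mul_rpow {p : ℝ} {u : E → ℝ} (hp : 1 < p)
    (hu : ContDiff ℝ 2 u) (hsupp : HasCompactSupport u) (hpos : tsupport u ⊆ {x | 0 < ℓ x})
    (e : E) (a : ℝ) :
    Integrable (fun x => |u x| ^ (p - 2) * fderiv ℝ u x e ^ 2 * ℓ x ^ a) μ := by
  have hDu : ContDiff ℝ 1 fun x => fderiv ℝ u x e :=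
    (hu.fderiv_right (m := 1) le_rfl).clm_apply contDiff_const
  have hDu_pos : tsupport (fun x => fderiv ℝ u x e) ⊆ {x | 0 < ℓ x} :=
    (tsupport_fderiv_apply_subset ℝ e).trans hpos
  have hK_nonneg (x : E) : 0 ≤ fderiv ℝ u x e * (fderiv ℝ u x e * ℓ x ^ a) := by
    rw [← mul_assoc]
    by_cases hx : x ∈ tsupport fun x => fderiv ℝ u x e
    · exact mul_nonneg (mul_self_nonneg _) (Real.rpow_nonneg (hDu_pos hx).le a)
    · simp [image_eq_zero_of_notMem_tsupport hx]
  have hint := integrable_abs_rpow_mul_fderiv_mul (μ := μ) hp (hu.of_le one_le_two)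
    (contDiff_mul_rpow hDu ℓ.contDiff (fun x hx => (hDu_pos hx).ne') a)
    (hsupp.fderiv_apply ℝ e).mul_right hK_nonneg
  simpa only [sq, mul_assoc] using hint

variable {v : E → ℝ}

lemma integral_fderiv_mul_rpow (hv : ContDiff ℝ 1 v) (hvc : HasCompactSupport v)
    (hpos : tsupport v ⊆ {x | 0 < ℓ x}) (e : E) (θ : ℝ) :
    ∫ x, fderiv ℝ v x e * ℓ x ^ θ ∂μ = -(θ * ℓ e * ∫ x, v x * ℓ x ^ (θ - 1) ∂μ) := by
  have hweight (x : E) :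
      v x * fderiv ℝ (fun y => ℓ y ^ θ) x e = θ * ℓ e * (v x * ℓ x ^ (θ - 1)) := by
    by_cases hx : x ∈ tsupport v
    · rw [fderiv_rpow_apply (hpos hx).ne']; ring
    · simp [image_eq_zero_of_notMem_tsupport hx]
  have hne : ∀ x ∈ tsupport v, ℓ x ≠ 0 := fun x hx => (hpos hx).ne'
  rw [← integral_const_mul, ← integral_congr_ae (Eventually.of_forall hweight),
    integral_mul_fderiv_eq_neg_fderiv_mul_of_integrable, neg_neg]
  · exact integrable_mul_rpow (continuous_fderiv_apply_const hv e)
      (hvc.fderiv_apply ℝ e) ℓ.continuous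
      (fun x hx => hne x (tsupport_fderiv_apply_subset ℝ e hx)) θ
  · simpa only [hweight] using
      (integrable_mul_rpow hv.continuous hvc ℓ.continuous hne (θ - 1)).const_mul (θ * ℓ e)
  · exact integrable_mul_rpow hv.continuous hvc ℓ.continuous hne θ
  · exact fun x _ => hv.differentiable one_ne_zero x
  · exact fun x hx => ℓ.differentiableAt.rpow_const (Or.inl (hne x hx))

end HalfSpace

lemma integral_abs_rpow_mul_sq_fderiv_mul_rpow_eq {ℓ : E →L[ℝ] ℝ} {p : ℝ} {u : E → ℝ} (hp : 1 < p)
    (hu : ContDiff ℝ 2 u) (hsupp : HasCompactSupport u) (hpos : tsupport u ⊆ {x | 0 < ℓ x})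
    (e : E) (θ : ℝ) :
    ∫ x, |u x| ^ (p - 2) * fderiv ℝ u x e ^ 2 * ℓ x ^ (θ + 1) ∂μ =
      (θ * ℓ e) ^ 2 / p ^ 2 * ∫ x, |u x| ^ p * ℓ x ^ (θ - 1) ∂μ +
        ∫ x, |u x| ^ (p - 2) * ℓ x ^ (θ - 1) *
          (θ * ℓ e / p * u x + ℓ x * fderiv ℝ u x e) ^ 2 ∂μ := by
  have hp0 : p ≠ 0 := by positivity
  have hu1 : ContDiff ℝ 1 u := hu.of_le one_le_two
  have hv : ContDiff ℝ 1 fun x => |u x| ^ p := hu1.norm_rpow hp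
  have hvc : HasCompactSupport fun x => |u x| ^ p :=
    hsupp.comp_left (g := fun s : ℝ => |s| ^ p) (by simp [hp0])
  have hv_pos : tsupport (fun x => |u x| ^ p) ⊆ {x | 0 < ℓ x} :=
    (tsupport_comp_subset (g := fun s : ℝ => |s| ^ p) (by simp [hp0]) u).trans hpos
  have hDv_pos := (tsupport_fderiv_apply_subset ℝ e).trans hv_pos
  have hint := integrable_mul_rpow (μ := μ) hv.continuous hvc ℓ.continuous
    (fun x hx => (hv_pos hx).ne') (θ - 1)
  have hint_cross := integrable_mul_rpow (μ := μ) (continuous_fderiv_apply_const hv e)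
    (hvc.fderiv_apply ℝ e) ℓ.continuous (fun x hx => (hDv_pos hx).ne') θ
  have hint_grad := integrable_abs_rpow_mul_sq_fderiv_mul_rpow (μ := μ) hp hu hsupp hpos e (θ + 1)
  have hcross := integral_fderiv_mul_rpow (μ := μ) hv hvc hv_pos e θ
  rw [integral_congr_ae (Eventually.of_forall fun x =>
      rpow_mul_sq_add_mul_fderiv_eq hp (hu1.differentiable one_ne_zero) hpos e θ (θ * ℓ e) x),
    integral_add ((hint.const_mul _).fun_add (hint_cross.const_mul _)) hint_grad,
    integral_add (hint.const_mul _) (hint_cross.const_mul _), integral_const_mul,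
    integral_const_mul, hcross]
  ring

end Calculus

end WeightedHardy

theorem stmt0_general {E : Type*} [NormedAddCommGroup E] [NormedSpace ℝ E]
    [FiniteDimensional ℝ E] [MeasurableSpace E] [BorelSpace E] (μ : Measure E)
    [μ.IsAddHaarMeasure] (ℓ : E →L[ℝ] ℝ) (e : E) {p : ℝ} (θ : ℝ) (hp : 1 < p) {u : E → ℝ}
    (hu : ContDiff ℝ 2 u) (hsupp : HasCompactSupport u) (hpos : tsupport u ⊆ {x | 0 < ℓ x}) :
    (θ * ℓ e) ^ 2 / p ^ 2 * ∫ x in {x | 0 < ℓ x}, |u x| ^ p * ℓ x ^ (θ - 1) ∂μ ≤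
      ∫ x in {x | 0 < ℓ x}, |u x| ^ (p - 2) * fderiv ℝ u x e ^ 2 * ℓ x ^ (θ + 1) ∂μ := by
  have hp0 : p ≠ 0 := by positivity
  have hu_zero {x : E} (hx : x ∉ tsupport u) : u x = 0 := image_eq_zero_of_notMem_tsupport hx
  have hDu_zero {x : E} (hx : x ∉ tsupport u) : fderiv ℝ u x e = 0 := by
    simp [fderiv_of_notMem_tsupport ℝ hx]
  rw [setIntegral_eq_integral_of_forall_compl_eq_zero fun x hx => by
      simp [hu_zero fun h => hx (hpos h), hp0],
    setIntegral_eq_integral_of_forall_compl_eq_zero fun x hx => by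
      simp [hDu_zero fun h => hx (hpos h)],
    WeightedHardy.integral_abs_rpow_mul_sq_fderiv_mul_rpow_eq hp hu hsupp hpos]
  refine le_add_of_nonneg_right (integral_nonneg fun x => ?_)
  by_cases hx : x ∈ tsupport u
  · have : 0 < ℓ x := hpos hx
    positivity
  · simp [hu_zero hx, hDu_zero hx]

/-- Weighted Hardy inequality in the last variable for smooth compactly
supported functions on the upper half space. -/
theorem stmt0 (n : ℕ) (p θ : ℝ) (hp : 1 < p)
    (u : (Fin (n + 1) → ℝ) → ℝ)
    (hu : ContDiff ℝ (⊤ : ℕ∞) u) (hsupp : HasCompactSupport u)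
    (hpos : tsupport u ⊆ {x : Fin (n + 1) → ℝ | 0 < x (Fin.last n)}) :
    θ ^ 2 / p ^ 2 *
        ∫ x in {x : Fin (n + 1) → ℝ | 0 < x (Fin.last n)},
          |u x| ^ p * x (Fin.last n) ^ (θ - 1) ≤
      ∫ x in {x : Fin (n + 1) → ℝ | 0 < x (Fin.last n)},
        |u x| ^ (p - 2) * (fderiv ℝ u x (Pi.single (Fin.last n) 1)) ^ 2 *
          x (Fin.last n) ^ (θ + 1) := by
  simpa using stmt0_general volume
    (ContinuousLinearMap.proj (R := ℝ) (φ := fun _ : Fin (n + 1) => ℝ) (Fin.last n))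
    (Pi.single (Fin.last n) 1) θ hp (contDiff_infty.1 hu 2) hsupp hpos
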